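/- Let m ≥ 3, let X be a finite connected 2-connected graph with oriented edges such that the number N of maximal spanning trees of X not containing a given edge is independent of the edge, and let X̃ be its ℤ_m-homology cover. Then for all x, y ∈ X̃, d_Q(x,y) = 0 if and only if x = y; hence d_Q is a metric on X̃. -/

import Mathlib

open Filter
open scoped ENNReal NNReal

/-- `F` is a coarse embedding of `(X, dX)` into `(Y, dY)`: there are non-decreasing
functions `ρ₋, ρ₊` tending to infinity which control the distortion of distances. -/
def CoarseEmbeddingWith {X Y : Type*} (dX : X → X → ℝ) (dY : Y → Y → ℝ) (F : X → Y) : Prop :=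
  ∃ ρminus ρplus : ℝ → ℝ, Monotone ρminus ∧ Monotone ρplus ∧
    Tendsto ρminus atTop atTop ∧ Tendsto ρplus atTop atTop ∧
    ∀ x x' : X, ρminus (dX x x') ≤ dY (F x) (F x') ∧ dY (F x) (F x') ≤ ρplus (dX x x')

def IsPseudoMetricOn {X : Type*} (d : X → X → ℝ) : Prop :=
  (∀ x, d x x = 0) ∧ (∀ x y, d x y = d y x) ∧ ∀ x y z, d x z ≤ d x y + d y z

def IsMetricOn {X : Type*} (d : X → X → ℝ) : Prop :=
  (∀ x y, d x y = 0 ↔ x = y) ∧ (∀ x y, d x y = d y x) ∧ ∀ x y z, d x z ≤ d x y + d y z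

/-- The diameter of a space with distance function `dY`. -/
noncomputable def spaceDiam {Y : Type*} (dY : Y → Y → ℝ) : ℝ :=
  sSup (Set.range fun p : Y × Y => dY p.1 p.2)

/-- `D` is a coarse disjoint union of the spaces `(Y i, dY i)`: it restricts to `dY i` on each
component `Y i`, and the distance between two distinct components exceeds the maximum of
their diameters. -/
def IsCoarseDisjointUnionOf {ι : Type*} {Y : ι → Type*} (dY : ∀ i, Y i → Y i → ℝ)
    (D : (Σ i, Y i) → (Σ i, Y i) → ℝ) : Prop :=
  (∀ (i : ι) (x y : Y i), D ⟨i, x⟩ ⟨i, y⟩ = dY i x y) ∧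
  ∀ i j, i ≠ j → ∀ (x : Y i) (y : Y j),
    max (spaceDiam (dY i)) (spaceDiam (dY j)) < D ⟨i, x⟩ ⟨j, y⟩

namespace MultiGraph

variable {V E : Type*}

/-- The initial vertex of a step traversing the edge `s.1` forwards (`s.2 = true`) or
backwards (`s.2 = false`). -/
def stepSrc (src tgt : E → V) (s : E × Bool) : V := if s.2 then src s.1 else tgt s.1

/-- The terminal vertex of a step. -/
def stepTgt (src tgt : E → V) (s : E × Bool) : V := if s.2 then tgt s.1 else src s.1

/-- `p` is a walk from `a` to `b` in the multigraph with edge endpoint maps `src`, `tgt`. -/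
def IsWalk (src tgt : E → V) : V → V → List (E × Bool) → Prop
  | a, b, [] => a = b
  | a, b, s :: p => stepSrc src tgt s = a ∧ IsWalk src tgt (stepTgt src tgt s) b p

/-- The multigraph is connected. -/
def Connected (src tgt : E → V) : Prop := ∀ a b : V, ∃ p, IsWalk src tgt a b p

/-- The graph distance between two vertices (with junk value if there is no walk). -/
noncomputable def gdist (src tgt : E → V) (a b : V) : ℕ :=
  sInf {n | ∃ p, IsWalk src tgt a b p ∧ p.length = n}

/-- A cycle based at `a`: a nonempty closed walk repeating no edge and no vertex. -/
def IsCycle (src tgt : E → V) (a : V) (p : List (E × Bool)) : Prop :=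
  IsWalk src tgt a a p ∧ p ≠ [] ∧ (p.map Prod.fst).Nodup ∧ (p.map (stepSrc src tgt)).Nodup

/-- The girth: the length of a shortest cycle (`⊤` if there are no cycles). -/
noncomputable def girth (src tgt : E → V) : ℕ∞ :=
  sInf {n : ℕ∞ | ∃ (a : V) (p : List (E × Bool)), IsCycle src tgt a p ∧ (p.length : ℕ∞) = n}

/-- Removing any single edge leaves the graph connected. -/
def TwoConnected (src tgt : E → V) : Prop :=
  ∀ (e : E) (a b : V), ∃ p, IsWalk src tgt a b p ∧ ∀ s ∈ p, s.1 ≠ e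

/-- `T` is the edge set of a maximal spanning tree: every pair of vertices is joined by a
walk through `T`, and every cycle of the graph uses an edge outside `T`. -/
def IsSpanningTree (src tgt : E → V) (T : Set E) : Prop :=
  (∀ a b : V, ∃ p, IsWalk src tgt a b p ∧ ∀ s ∈ p, s.1 ∈ T) ∧
  ∀ (a : V) (p : List (E × Bool)), IsCycle src tgt a p → ∃ s ∈ p, s.1 ∉ T

/-- The number `N_e` of maximal spanning trees avoiding the edge `e`. -/
noncomputable def numTreesAvoiding (src tgt : E → V) (e : E) : ℕ :=
  Nat.card {T : Set E // IsSpanningTree src tgt T ∧ e ∉ T}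

open Classical in
/-- A chosen geodesic from `a` to `b` (junk value `[]` if there is no walk). -/
noncomputable def geod (src tgt : E → V) (a b : V) : List (E × Bool) :=
  if h : ∃ p, IsWalk src tgt a b p ∧ p.length = gdist src tgt a b then h.choose else []

open Classical in
/-- The number of times the walk `p` traverses the edge `e` in the positive direction. -/
noncomputable def countF (e : E) (p : List (E × Bool)) : ℕ :=
  (p.filter fun s => s.1 = e ∧ s.2 = true).length

open Classical in
/-- The number of times the walk `p` traverses the edge `e` in the negative direction. -/
noncomputable def countB (e : E) (p : List (E × Bool)) : ℕ :=
  (p.filter fun s => s.1 = e ∧ s.2 = false).length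

/-- Two walks are `m`-congruent if for every edge the signed numbers of traversals agree
modulo `m`. -/
def MCongruent (m : ℕ) (p₁ p₂ : List (E × Bool)) : Prop :=
  ∀ e : E, ((countF e p₁ : ℤ) - (countB e p₁ : ℤ)) ≡
    ((countF e p₂ : ℤ) - (countB e p₂ : ℤ)) [ZMOD (m : ℤ)]

/-- A walk has no backtrack if no step is immediately followed by the same edge reversed. -/
def NoBacktrack (p : List (E × Bool)) : Prop :=
  List.Chain' (fun s s' => ¬(s'.1 = s.1 ∧ s'.2 = !s.2)) p

section Cover

open Classical in
/-- The image in `(ℤ/m)^{E ∖ T₀}` of the generator of `π₁` corresponding to the edge `e`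
(trivial if `e` lies in the maximal spanning tree `T₀`). -/
noncomputable def coverRho (m : ℕ) (T₀ : Set E) (e : E) : {e' : E // e' ∉ T₀} → ZMod m :=
  fun f => if f.1 = e then 1 else 0

/-- Source map of the `ℤ/m`-homology cover built from the maximal spanning tree `T₀`:
the lift `(e, k)` of the edge `e` starts at `(src e, k)`. -/
def coverSrc (m : ℕ) (src : E → V) (T₀ : Set E) :
    E × ({e' : E // e' ∉ T₀} → ZMod m) → V × ({e' : E // e' ∉ T₀} → ZMod m) :=
  fun ek => (src ek.1, ek.2)

/-- Target map of the `ℤ/m`-homology cover: the lift `(e, k)` of the edge `e` ends at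
`(tgt e, k + ρ(e))`. -/
noncomputable def coverTgt (m : ℕ) (tgt : E → V) (T₀ : Set E) :
    E × ({e' : E // e' ∉ T₀} → ZMod m) → V × ({e' : E // e' ∉ T₀} → ZMod m) :=
  fun ek => (tgt ek.1, ek.2 + coverRho m T₀ ek.1)

open Classical in
/-- The number of positively oriented lifts of the edge `e` traversed by a walk in the cover. -/
noncomputable def countLiftF (m : ℕ) (T₀ : Set E) (e : E)
    (p : List ((E × ({e' : E // e' ∉ T₀} → ZMod m)) × Bool)) : ℕ :=
  (p.filter fun s => s.1.1 = e ∧ s.2 = true).length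

open Classical in
/-- The number of negatively oriented lifts of the edge `e` traversed by a walk in the cover. -/
noncomputable def countLiftB (m : ℕ) (T₀ : Set E) (e : E)
    (p : List ((E × ({e' : E // e' ∉ T₀} → ZMod m)) × Bool)) : ℕ :=
  (p.filter fun s => s.1.1 = e ∧ s.2 = false).length

/-- `φ(e, x, y)`: the smallest non-negative residue modulo `m` of the absolute difference
between the numbers of positively and negatively oriented lifts of `e` traversed by the
chosen geodesic from `x` to `y` in the `ℤ/m`-homology cover. -/
noncomputable def phi (m : ℕ) (src tgt : E → V) (T₀ : Set E) (e : E)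
    (x y : V × ({e' : E // e' ∉ T₀} → ZMod m)) : ℕ :=
  (((countLiftF m T₀ e (geod (coverSrc m src T₀) (coverTgt m tgt T₀) x y) : ℤ) -
      (countLiftB m T₀ e (geod (coverSrc m src T₀) (coverTgt m tgt T₀) x y) : ℤ)).natAbs) % m

/-- The pseudometric `d_Q` on the `ℤ/m`-homology cover:
`d_Q(x,y) = Σ_{e ∈ E} Σ_{T : e ∉ T} (1/N_e) · min{φ(e,x,y), m − φ(e,x,y)}`,
the inner sum ranging over maximal spanning trees not containing `e`. -/
noncomputable def dQ (m : ℕ) (src tgt : E → V) (T₀ : Set E)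
    (x y : V × ({e' : E // e' ∉ T₀} → ZMod m)) : ℝ :=
  ∑ᶠ (e : E), ∑ᶠ (T : Set E) (_ : IsSpanningTree src tgt T ∧ e ∉ T),
    (1 / (numTreesAvoiding src tgt e : ℝ)) *
      min (phi m src tgt T₀ e x y : ℝ) ((m : ℝ) - (phi m src tgt T₀ e x y : ℝ))

open Classical in
/-- The distance `d_T(C^T_x, C^T_y)` between the clouds of `x` and `y` in the Cayley graph
of `(ℤ/m)^{E ∖ T}` obtained by collapsing the clouds associated to the maximal spanning
tree `T`: the least number of lifts of edges outside `T` traversed by a walk from `x` to `y`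
in the cover. -/
noncomputable def cloudDist (m : ℕ) (src tgt : E → V) (T₀ : Set E) (T : Set E)
    (x y : V × ({e' : E // e' ∉ T₀} → ZMod m)) : ℕ :=
  sInf {n | ∃ p, IsWalk (coverSrc m src T₀) (coverTgt m tgt T₀) x y p ∧
    (p.filter fun s => s.1.1 ∉ T).length = n}

open Classical in
/-- The cloud `C^T_x ∈ (ℤ/m)^{E ∖ T}` containing `x`, computed from a chosen geodesic from a
fixed basepoint of the cover to `x` by counting signed traversals of lifts of edges outside
`T`. -/
noncomputable def cloud (m : ℕ) (src tgt : E → V) (T₀ : Set E) (T : Set E)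
    (x : V × ({e' : E // e' ∉ T₀} → ZMod m)) : {e : E // e ∉ T} → ZMod m :=
  if h : Nonempty (V × ({e' : E // e' ∉ T₀} → ZMod m)) then
    fun f =>
      (((countLiftF m T₀ f.1 (geod (coverSrc m src T₀) (coverTgt m tgt T₀) h.some x) : ℤ) -
        (countLiftB m T₀ f.1 (geod (coverSrc m src T₀) (coverTgt m tgt T₀) h.some x) : ℤ)
          : ℤ) : ZMod m)
  else fun _ => 0

end Cover

/-- `(pV, pE)` is a covering of multigraphs: it commutes with the endpoint maps, and steps
lift uniquely at every vertex. -/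
def IsGraphCovering {V' E' : Type*} (src tgt : E → V) (src' tgt' : E' → V')
    (pV : V' → V) (pE : E' → E) : Prop :=
  (∀ e : E', pV (src' e) = src (pE e)) ∧ (∀ e : E', pV (tgt' e) = tgt (pE e)) ∧
  ∀ (v' : V') (s : E × Bool), stepSrc src tgt s = pV v' →
    ∃! s' : E' × Bool, stepSrc src' tgt' s' = v' ∧ pE s'.1 = s.1 ∧ s'.2 = s.2

end MultiGraph

/-- The word length of `a` with respect to the symmetrization of the generating set `S`
in an additive group. -/
noncomputable def addWordLength {A : Type*} [AddGroup A] (S : Set A) (a : A) : ℕ :=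
  sInf {n | ∃ l : List A, (∀ x ∈ l, x ∈ S ∨ -x ∈ S) ∧ l.sum = a ∧ l.length = n}

open Classical in
/-- The word metric on `(ℤ/m)^r` with respect to the standard generating set
(one canonical generator for each factor). -/
noncomputable def zmodWordDist (m r : ℕ) (a b : Fin r → ZMod m) : ℕ :=
  addWordLength {g : Fin r → ZMod m | ∃ i : Fin r, g = Pi.single i 1} (b - a)

/-!
A walk in the cover projects to a `ℤ/m`-valued `1`-chain on `X`, and `d_Q(x, y)` is the Lee norm of
the chain of the geodesic from `x` to `y`. The chain of a walk determines its endpoints relative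
to each other: its boundary is the difference of the underlying vertices, and its coefficients off
`T₀` are the difference of the `(ℤ/m)^r`-coordinates. Conversely the endpoints determine the
chain, because the chains of two walks with the same endpoints differ by a cycle supported on the
tree `T₀`, and a tree carries no nonzero cycle. Hence the chain from `x` to `y` is an additive
cocycle vanishing exactly on the diagonal, and the norm of such a cocycle is a metric.
Two-connectedness makes every `N_e` nonzero, so that every edge contributes to `d_Q`.
-/

theorem isMetricOn_of_cocycle {X A : Type*} [AddGroup A] (ν : AddGroupNorm A) {c : X → X → A}
    (hadd : ∀ x y z, c x z = c x y + c y z) (hinj : ∀ x y, c x y = 0 → x = y) :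
    IsMetricOn fun x y => ν (c x y) := by
  have hself (x : X) : c x x = 0 := by simpa using hadd x x x
  refine ⟨fun x y => ?_, fun x y => ?_, fun x y z => ?_⟩
  · rw [map_eq_zero_iff_eq_zero]
    exact ⟨hinj x y, fun h => h ▸ hself x⟩
  · have hneg : c x y = -c y x := eq_neg_of_add_eq_zero_left (by rw [← hadd, hself])
    simp only [hneg, map_neg_eq_map]
  · simpa only [hadd x y z] using map_add_le_add ν (c x y) (c y z)

/-- The Lee norm on `(ℤ/m)^ι`, the sum over the coordinates of the distance to `0` in the
cycle `ℤ/m`; for `m = 0` it is the `ℓ¹` norm. -/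
noncomputable def leeNorm (m : ℕ) (ι : Type*) [Fintype ι] : AddGroupNorm (ι →₀ ZMod m) where
  toFun c := ∑ i, ((c i).valMinAbs.natAbs : ℝ)
  map_zero' := by simp
  add_le' c c' := by
    rw [← Finset.sum_add_distrib]
    refine Finset.sum_le_sum fun i _ => ?_
    exact_mod_cast (ZMod.natAbs_valMinAbs_add_le (c i) (c' i)).trans (Int.natAbs_add_le _ _)
  neg' c := by simp
  eq_zero_of_map_eq_zero' c hc := by
    rw [Finset.sum_eq_zero_iff_of_nonneg fun _ _ => Nat.cast_nonneg _] at hc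
    ext i
    simpa using hc i (Finset.mem_univ i)

theorem leeNorm_apply {m : ℕ} {ι : Type*} [Fintype ι] (c : ι →₀ ZMod m) :
    leeNorm m ι c = ∑ i, ((c i).valMinAbs.natAbs : ℝ) :=
  rfl

theorem min_natAbs_mod_sub_eq_natAbs_valMinAbs {m : ℕ} [NeZero m] (z : ℤ) :
    min ((z.natAbs % m : ℕ) : ℝ) ((m : ℝ) - ((z.natAbs % m : ℕ) : ℝ)) =
      ((z : ZMod m).valMinAbs.natAbs : ℝ) := by
  have hz : (z : ZMod m).valMinAbs.natAbs = (z.natAbs : ZMod m).valMinAbs.natAbs := by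
    rcases Int.natAbs_eq z with h | h
    · rw [h, Int.natAbs_natCast, Int.cast_natCast]
    · rw [h, Int.natAbs_neg, Int.natAbs_natCast, Int.cast_neg, Int.cast_natCast,
        ZMod.natAbs_valMinAbs_neg]
  rw [hz, ZMod.valMinAbs_natAbs_eq_min, ZMod.val_natCast, Nat.cast_min,
    Nat.cast_sub (Nat.mod_lt _ (NeZero.pos m)).le]

theorem finsum_one_div_card_mul {α 𝕜 : Type*} [Finite α] [Field 𝕜] [CharZero 𝕜] {P : α → Prop}
    (hP : ∃ a, P a) (c : 𝕜) : ∑ᶠ (a : α) (_ : P a), 1 / (Nat.card {a // P a} : 𝕜) * c = c := by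
  classical
  have := Fintype.ofFinite α
  have : Nonempty {a // P a} := nonempty_subtype.2 hP
  have hcard : (Nat.card {a // P a} : 𝕜) ≠ 0 := Nat.cast_ne_zero.2 Nat.card_pos.ne'
  rw [← finsum_subtype_eq_finsum_cond (f := fun _ => 1 / (Nat.card {a // P a} : 𝕜) * c) P,
    finsum_eq_sum_of_fintype, Finset.sum_const, Finset.card_univ, nsmul_eq_mul,
    ← Nat.card_eq_fintype_card, ← mul_assoc, mul_one_div_cancel hcard, one_mul]

namespace MultiGraph

section Walks

variable {V E : Type*} {src tgt : E → V} {a b c : V} {p q : List (E × Bool)} {S T : Set E}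

theorem IsWalk.append (hp : IsWalk src tgt a b p) (hq : IsWalk src tgt b c q) :
    IsWalk src tgt a c (p ++ q) := by
  induction p generalizing a with
  | nil => exact hp ▸ hq
  | cons s p ih => exact ⟨hp.1, ih hp.2⟩

theorem isWalk_geod (h : ∃ p, IsWalk src tgt a b p) : IsWalk src tgt a b (geod src tgt a b) := by
  obtain ⟨p, hp⟩ := h
  have hgeod : ∃ q, IsWalk src tgt a b q ∧ q.length = gdist src tgt a b :=
    Nat.sInf_mem (s := {n | ∃ q, IsWalk src tgt a b q ∧ q.length = n}) ⟨_, p, hp, rfl⟩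
  rw [geod, dif_pos hgeod]
  exact hgeod.choose_spec.1

/-- The list of all vertices visited by a walk `p` ending at `b`, as in
`SimpleGraph.Walk.support`. -/
def support (src tgt : E → V) (p : List (E × Bool)) (b : V) : List V :=
  p.map (stepSrc src tgt) ++ [b]

theorem support_sublist (h : q.Sublist p) :
    (support src tgt q b).Sublist (support src tgt p b) :=
  (h.map _).append (List.Sublist.refl _)

theorem stepSrc_mem_support {s : E × Bool} (hs : s ∈ p) :
    stepSrc src tgt s ∈ support src tgt p b :=
  List.mem_append_left _ (List.mem_map_of_mem hs)

namespace IsWalk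

theorem start_mem_support (hp : IsWalk src tgt a b p) : a ∈ support src tgt p b := by
  cases p with
  | nil => exact List.mem_singleton.2 hp
  | cons s p => exact hp.1 ▸ List.mem_cons_self

theorem stepTgt_mem_support (hp : IsWalk src tgt a b p) {s : E × Bool} (hs : s ∈ p) :
    stepTgt src tgt s ∈ support src tgt p b := by
  induction p generalizing a with
  | nil => cases hs
  | cons t p ih =>
    refine List.mem_cons_of_mem _ ?_
    rcases List.mem_cons.1 hs with rfl | hs
    · exact hp.2.start_mem_support
    · exact ih hp.2 hs

theorem exists_suffix (hp : IsWalk src tgt a b p) (hc : c ∈ support src tgt p b) :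
    ∃ q, q <:+ p ∧ IsWalk src tgt c b q := by
  induction p generalizing a with
  | nil => exact ⟨[], List.suffix_refl _, List.mem_singleton.1 hc⟩
  | cons s p ih =>
    rcases List.mem_cons.1 hc with rfl | hc
    · exact ⟨s :: p, List.suffix_refl _, rfl, hp.2⟩
    · obtain ⟨q, hqp, hq⟩ := ih hp.2 hc
      exact ⟨q, hqp.trans (List.suffix_cons _ _), hq⟩

theorem exists_sublist_nodup_support (hp : IsWalk src tgt a b p) :
    ∃ q, q.Sublist p ∧ IsWalk src tgt a b q ∧ (support src tgt q b).Nodup := by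
  induction p generalizing a with
  | nil => exact ⟨[], List.Sublist.refl _, hp, List.nodup_singleton b⟩
  | cons s p ih =>
    obtain ⟨rfl, hp⟩ := hp
    obtain ⟨q, hqp, hq, hnodup⟩ := ih hp
    by_cases hs : stepSrc src tgt s ∈ support src tgt q b
    · obtain ⟨r, hrq, hr⟩ := hq.exists_suffix hs
      exact ⟨r, (hrq.sublist.trans hqp).cons s, hr, hnodup.sublist (support_sublist hrq.sublist)⟩
    · exact ⟨s :: q, hqp.cons_cons s, ⟨rfl, hq⟩, List.nodup_cons.2 ⟨hs, hnodup⟩⟩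

theorem nodup_edges (hp : IsWalk src tgt a b p) (h : (support src tgt p b).Nodup) :
    (p.map Prod.fst).Nodup := by
  induction p generalizing a with
  | nil => exact List.nodup_nil
  | cons s p ih =>
    obtain ⟨hs, h⟩ := List.nodup_cons.1 h
    refine List.nodup_cons.2 ⟨fun hmem => hs ?_, ih hp.2 h⟩
    -- A later step along the same edge visits both of its ends, in particular the source of `s`.
    obtain ⟨⟨e, ε'⟩, ht, rfl : e = s.1⟩ := List.mem_map.1 hmem
    have hsrc := stepSrc_mem_support (src := src) (tgt := tgt) (b := b) ht
    have htgt := hp.2.stepTgt_mem_support ht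
    rcases s with ⟨e, _ | _⟩ <;> cases ε' <;> first | exact hsrc | exact htgt

end IsWalk

/-- The vertices `a` and `b` are joined by a walk through edges in `S`. -/
def JoinedIn (src tgt : E → V) (S : Set E) (a b : V) : Prop :=
  ∃ p, IsWalk src tgt a b p ∧ ∀ s ∈ p, s.1 ∈ S

namespace JoinedIn

theorem refl (S : Set E) (a : V) : JoinedIn src tgt S a a :=
  ⟨[], rfl, by simp⟩

theorem trans (hab : JoinedIn src tgt S a b) (hbc : JoinedIn src tgt S b c) :
    JoinedIn src tgt S a c := by
  obtain ⟨p, hp, hpS⟩ := hab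
  obtain ⟨q, hq, hqS⟩ := hbc
  exact ⟨p ++ q, hp.append hq, List.forall_mem_append.2 ⟨hpS, hqS⟩⟩

theorem edge {e : E} (he : e ∈ S) : JoinedIn src tgt S (src e) (tgt e) :=
  ⟨[(e, true)], ⟨rfl, rfl⟩, by simpa using he⟩

theorem edge_symm {e : E} (he : e ∈ S) : JoinedIn src tgt S (tgt e) (src e) :=
  ⟨[(e, false)], ⟨rfl, rfl⟩, by simpa using he⟩

theorem symm (h : JoinedIn src tgt S a b) : JoinedIn src tgt S b a := by
  obtain ⟨p, hp, hpS⟩ := h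
  induction p generalizing a with
  | nil => exact hp ▸ refl S a
  | cons s p ih =>
    obtain ⟨rfl, hp⟩ := hp
    obtain ⟨hs, hpS⟩ := List.forall_mem_cons.1 hpS
    refine (ih hp hpS).trans ?_
    rcases s with ⟨e, _ | _⟩
    · exact edge hs
    · exact edge_symm hs

theorem rel_of_edges (h : JoinedIn src tgt S a b) (r : Setoid V)
    (hr : ∀ e ∈ S, r (src e) (tgt e)) : r a b := by
  obtain ⟨p, hp, hpS⟩ := h
  induction p generalizing a with
  | nil => exact hp ▸ r.refl a
  | cons s p ih =>
    obtain ⟨rfl, hp⟩ := hp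
    obtain ⟨hs, hpS⟩ := List.forall_mem_cons.1 hpS
    refine r.trans ?_ (ih hp hpS)
    rcases s with ⟨e, _ | _⟩
    · exact r.symm (hr e hs)
    · exact hr e hs

end JoinedIn

/-- The equivalence relation of lying in the same component of the subgraph with edge
set `S`. -/
def joinedSetoid (src tgt : E → V) (S : Set E) : Setoid V where
  r := JoinedIn src tgt S
  iseqv := ⟨.refl S, .symm, .trans⟩

/-- The subgraph with edge set `S` is connected and contains all vertices. -/
def Spans (src tgt : E → V) (S : Set E) : Prop :=
  ∀ a b, JoinedIn src tgt S a b

theorem Spans.diff_singleton {e : E} (hS : Spans src tgt S)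
    (he : JoinedIn src tgt (S \ {e}) (src e) (tgt e)) : Spans src tgt (S \ {e}) := by
  refine fun a b => (hS a b).rel_of_edges (joinedSetoid src tgt (S \ {e})) fun f hf => ?_
  rcases eq_or_ne f e with rfl | hfe
  · exact he
  · exact JoinedIn.edge ⟨hf, hfe⟩

theorem IsCycle.joinedIn_diff_singleton {s : E × Bool} (hc : IsCycle src tgt a (s :: p))
    (hS : ∀ t ∈ s :: p, t.1 ∈ S) : JoinedIn src tgt (S \ {s.1}) (src s.1) (tgt s.1) := by
  obtain ⟨⟨rfl, hp⟩, -, hedges, -⟩ := hc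
  have hs : s.1 ∉ p.map Prod.fst := (List.nodup_cons.1 hedges).1
  have hback : JoinedIn src tgt (S \ {s.1}) (stepTgt src tgt s) (stepSrc src tgt s) :=
    ⟨p, hp, fun t ht => ⟨hS t (List.mem_cons_of_mem _ ht),
      fun hts => hs (List.mem_map.2 ⟨t, ht, hts⟩)⟩⟩
  rcases s with ⟨e, _ | _⟩
  · exact hback
  · exact hback.symm

theorem isSpanningTree_of_minimal (hT : Minimal (Spans src tgt) T) :
    IsSpanningTree src tgt T := by
  refine ⟨hT.prop, fun a p hc => ?_⟩
  by_contra! hpT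
  cases p with
  | nil => exact hc.2.1 rfl
  | cons s p =>
    have hspans := hT.prop.diff_singleton (hc.joinedIn_diff_singleton hpT)
    exact (hT.le_of_le hspans Set.sdiff_subset (hpT s List.mem_cons_self)).2 rfl

theorem Spans.exists_isSpanningTree_subset [Finite E] (hS : Spans src tgt S) :
    ∃ T ⊆ S, IsSpanningTree src tgt T := by
  obtain ⟨T, hTS, hT⟩ := (Set.toFinite {S | Spans src tgt S}).exists_le_minimal hS
  exact ⟨T, hTS, isSpanningTree_of_minimal hT⟩

theorem TwoConnected.exists_isSpanningTree_notMem [Finite E] (h : TwoConnected src tgt) (e : E) :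
    ∃ T, IsSpanningTree src tgt T ∧ e ∉ T := by
  have hspans : Spans src tgt {e}ᶜ := h e
  obtain ⟨T, hTe, hT⟩ := hspans.exists_isSpanningTree_subset
  exact ⟨T, hT, fun he => hTe he rfl⟩

theorem IsSpanningTree.not_joinedIn_diff_singleton (hT : IsSpanningTree src tgt T) {e : E}
    (he : e ∈ T) : ¬JoinedIn src tgt (T \ {e}) (src e) (tgt e) := by
  intro h
  obtain ⟨p, hp, hpT⟩ := h.symm
  obtain ⟨q, hqp, hq, hnodup⟩ := hp.exists_sublist_nodup_support
  replace hpT : ∀ s ∈ q, s.1 ∈ T \ {e} := fun s hs => hpT s (hqp.subset hs)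
  have heq : e ∉ q.map Prod.fst := fun hmem => by
    obtain ⟨s, hs, rfl⟩ := List.mem_map.1 hmem
    exact (hpT s hs).2 rfl
  have hcycle : IsCycle src tgt (src e) ((e, true) :: q) :=
    ⟨⟨rfl, hq⟩, List.cons_ne_nil _ _, List.nodup_cons.2 ⟨heq, hq.nodup_edges hnodup⟩,
      List.nodup_append_comm.1 hnodup⟩
  obtain ⟨s, hs, hsT⟩ := hT.2 _ _ hcycle
  rcases List.mem_cons.1 hs with rfl | hs
  · exact hsT he
  · exact hsT (hpT s hs).1

end Walks

section Chains

variable {V E A : Type*} {src tgt : E → V} {a b : V}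

/-- The sum of `f` over the edges of a walk, an edge traversed backwards counting with a
negative sign. -/
def signedSum [AddGroup A] (f : E → A) (p : List (E × Bool)) : A :=
  (p.map fun s => if s.2 then f s.1 else -f s.1).sum

theorem signedSum_cons [AddGroup A] (f : E → A) (s : E × Bool) (p : List (E × Bool)) :
    signedSum f (s :: p) = (if s.2 then f s.1 else -f s.1) + signedSum f p := by
  simp [signedSum]

theorem signedSum_append [AddGroup A] (f : E → A) (p q : List (E × Bool)) :
    signedSum f (p ++ q) = signedSum f p + signedSum f q := by
  simp [signedSum]

theorem map_signedSum {B : Type*} [AddGroup A] [AddGroup B] (φ : A →+ B) (f : E → A)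
    (p : List (E × Bool)) : φ (signedSum f p) = signedSum (φ ∘ f) p := by
  simp [signedSum, map_list_sum, Function.comp_def, apply_ite φ]

theorem IsWalk.signedSum_sub [AddCommGroup A] {p : List (E × Bool)} (hp : IsWalk src tgt a b p)
    (g : V → A) : signedSum (fun e => g (tgt e) - g (src e)) p = g b - g a := by
  induction p generalizing a with
  | nil => simp [signedSum, show a = b from hp]
  | cons s p ih =>
    obtain ⟨rfl, hp⟩ := hp
    rw [signedSum_cons, ih hp]
    rcases s with ⟨e, _ | _⟩ <;> simp [stepSrc, stepTgt]

variable {R : Type*} [Ring R]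

/-- The cellular boundary `∂ : C₁(X; R) → C₀(X; R)`, sending an edge to its target minus its
source. -/
noncomputable def boundary (R : Type*) [Ring R] (src tgt : E → V) : (E →₀ R) →ₗ[R] V →₀ R :=
  Finsupp.linearCombination R fun e => Finsupp.single (tgt e) 1 - Finsupp.single (src e) 1

theorem boundary_single_one (e : E) :
    boundary R src tgt (Finsupp.single e 1) =
      Finsupp.single (tgt e) 1 - Finsupp.single (src e) 1 := by
  simp [boundary]

theorem linearCombination_boundary (g : V → R) (c : E →₀ R) :
    Finsupp.linearCombination R g (boundary R src tgt c) =
      Finsupp.linearCombination R (fun e => g (tgt e) - g (src e)) c := by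
  rw [boundary, Finsupp.linearCombination_linearCombination]
  simp

theorem IsSpanningTree.eq_zero_of_boundary_eq_zero {T : Set E} (hT : IsSpanningTree src tgt T)
    {c : E →₀ R} (hcT : ∀ e ∉ T, c e = 0) (hc : boundary R src tgt c = 0) : c = 0 := by
  classical
  ext e
  by_cases he : e ∈ T
  · -- Pair `c` with the coboundary of the indicator function of the far side of `T \ {e}`.
    let g : V → R := fun v => if JoinedIn src tgt (T \ {e}) (src e) v then 0 else 1
    have hg (f : E) (hf : f ∈ T \ {e}) : g (tgt f) = g (src f) := by
      have hiff : JoinedIn src tgt (T \ {e}) (src e) (tgt f) ↔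
          JoinedIn src tgt (T \ {e}) (src e) (src f) :=
        ⟨fun h => h.trans (.edge_symm hf), fun h => h.trans (.edge hf)⟩
      simp only [g, hiff]
    have hpair := linearCombination_boundary (src := src) (tgt := tgt) g c
    rw [hc, map_zero, Finsupp.linearCombination_apply, Finsupp.sum_eq_single e] at hpair
    · simpa [g, JoinedIn.refl, hT.not_joinedIn_diff_singleton he] using hpair.symm
    · intro f _ hfe
      by_cases hf : f ∈ T
      · simp [hg f ⟨hf, hfe⟩]
      · simp [hcT f hf]
    · simp
  · exact hcT e he

end Chains

section Cover

variable {V E : Type*} {src tgt : E → V} {m : ℕ} {T₀ : Set E}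

/-- The deck group `K = (ℤ/m)^{E ∖ T₀}` of the `ℤ/m`-homology cover. -/
abbrev DeckGroup (m : ℕ) (T₀ : Set E) : Type _ :=
  {e : E // e ∉ T₀} → ZMod m

theorem coverRho_of_mem {e : E} (he : e ∈ T₀) : coverRho m T₀ e = 0 := by
  ext f
  exact if_neg fun h : f.1 = e => f.2 (h ▸ he)

open Classical in
theorem coverRho_of_notMem (e : {e : E // e ∉ T₀}) : coverRho m T₀ e = Pi.single e 1 := by
  ext f
  simp [coverRho, Pi.single_apply, Subtype.ext_iff]

theorem Spans.cover [Finite E] (h : Spans src tgt T₀) :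
    Spans (coverSrc m src T₀) (coverTgt m tgt T₀) Set.univ := by
  classical
  let r : Setoid (V × DeckGroup m T₀) :=
    joinedSetoid (coverSrc m src T₀) (coverTgt m tgt T₀) Set.univ
  have hedge (e : E) (k : DeckGroup m T₀) : r (src e, k) (tgt e, k + coverRho m T₀ e) :=
    JoinedIn.edge (src := coverSrc m src T₀) (tgt := coverTgt m tgt T₀) (Set.mem_univ (e, k))
  have hsheet (k : DeckGroup m T₀) (v w : V) : r (v, k) (w, k) :=
    (h v w).rel_of_edges (r.comap (·, k)) fun e he => by
      simpa [Setoid.comap_rel, coverRho_of_mem he] using hedge e k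
  let H : AddSubgroup (DeckGroup m T₀) :=
    { carrier := {l | ∀ v k, r (v, k) (v, k + l)}
      zero_mem' := fun v k => by simp
      add_mem' := fun {l l'} hl hl' v k => by
        rw [← add_assoc]
        exact r.trans (hl v k) (hl' v (k + l))
      neg_mem' := fun {l} hl v k => by simpa using r.symm (hl v (k + -l)) }
  have hgen (e : {e : E // e ∉ T₀}) : Pi.single e (1 : ZMod m) ∈ H := fun v k => by
    rw [← coverRho_of_notMem e]
    exact r.trans (hsheet k v _) (r.trans (hedge e k) (hsheet _ _ v))
  have hH (l : DeckGroup m T₀) : l ∈ H := by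
    refine AddSubgroup.pi_mem_of_single_mem l fun e => ?_
    obtain ⟨n, hn⟩ := ZMod.intCast_surjective (l e)
    simpa [← hn, ← Pi.single_smul] using H.zsmul_mem (hgen e) n
  intro x y
  have hy : r (x.1, x.2) (x.1, x.2 + (y.2 - x.2)) := hH (y.2 - x.2) x.1 x.2
  rw [add_sub_cancel] at hy
  exact hy.trans (hsheet y.2 x.1 y.1)

/-- The `ℤ/m`-valued `1`-chain on `X` to which a walk in the cover projects: its coefficient at
`e` is the signed number, modulo `m`, of traversals of lifts of `e`. -/
noncomputable def liftChain (p : List ((E × DeckGroup m T₀) × Bool)) : E →₀ ZMod m :=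
  signedSum (fun ek => Finsupp.single ek.1 1) p

theorem liftChain_apply (p : List ((E × DeckGroup m T₀) × Bool)) (e : E) :
    liftChain p e = (((countLiftF m T₀ e p : ℤ) - (countLiftB m T₀ e p : ℤ) : ℤ) : ZMod m) := by
  induction p with
  | nil => simp [liftChain, signedSum, countLiftF, countLiftB]
  | cons s p ih =>
    rw [liftChain] at ih ⊢
    rw [signedSum_cons, Finsupp.add_apply, ih]
    rcases s with ⟨⟨f, k⟩, _ | _⟩ <;> by_cases h : f = e <;>
      simp [countLiftF, countLiftB, h] <;> ring

section CoverWalk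

variable {x y : V × DeckGroup m T₀} {p q : List ((E × DeckGroup m T₀) × Bool)}

theorem IsWalk.boundary_liftChain (hp : IsWalk (coverSrc m src T₀) (coverTgt m tgt T₀) x y p) :
    boundary (ZMod m) src tgt (liftChain p) = Finsupp.single y.1 1 - Finsupp.single x.1 1 := by
  rw [liftChain, ← LinearMap.toAddMonoidHom_coe, map_signedSum,
    ← hp.signedSum_sub fun z => Finsupp.single z.1 (1 : ZMod m)]
  congr 1
  ext1 ek
  exact boundary_single_one ek.1

theorem IsWalk.liftChain_apply_notMem
    (hp : IsWalk (coverSrc m src T₀) (coverTgt m tgt T₀) x y p) (e : {e : E // e ∉ T₀}) :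
    liftChain p e = y.2 e - x.2 e := by
  classical
  rw [liftChain, ← Finsupp.applyAddHom_apply, map_signedSum, ← hp.signedSum_sub fun z => z.2 e]
  congr 1
  ext1 ek
  simp [coverSrc, coverTgt, coverRho, Finsupp.single_apply, eq_comm (a := ek.1)]

theorem IsWalk.liftChain_eq (hT₀ : IsSpanningTree src tgt T₀)
    (hp : IsWalk (coverSrc m src T₀) (coverTgt m tgt T₀) x y p)
    (hq : IsWalk (coverSrc m src T₀) (coverTgt m tgt T₀) x y q) : liftChain p = liftChain q := by
  refine sub_eq_zero.1 (hT₀.eq_zero_of_boundary_eq_zero (fun e he => ?_) ?_)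
  · rw [Finsupp.sub_apply, hp.liftChain_apply_notMem ⟨e, he⟩, hq.liftChain_apply_notMem ⟨e, he⟩,
      sub_self]
  · rw [map_sub, hp.boundary_liftChain, hq.boundary_liftChain, sub_self]

theorem IsWalk.eq_of_liftChain_eq_zero [Nontrivial (ZMod m)]
    (hp : IsWalk (coverSrc m src T₀) (coverTgt m tgt T₀) x y p) (h : liftChain p = 0) :
    x = y := by
  have hvertex := hp.boundary_liftChain
  rw [h, map_zero, eq_comm, sub_eq_zero] at hvertex
  refine Prod.ext (Finsupp.single_left_injective one_ne_zero hvertex).symm (funext fun e => ?_)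
  have hcoord := hp.liftChain_apply_notMem e
  rw [h, Finsupp.zero_apply, eq_comm, sub_eq_zero] at hcoord
  exact hcoord.symm

end CoverWalk

/-- The `1`-chain on `X` to which the chosen geodesic from `x` to `y` projects; up to sign and
reduction modulo `m`, its coefficient at `e` is the paper's `φ(e, x, y)`. -/
noncomputable def geodChain (src tgt : E → V) (x y : V × DeckGroup m T₀) : E →₀ ZMod m :=
  liftChain (geod (coverSrc m src T₀) (coverTgt m tgt T₀) x y)

theorem isWalk_geod_cover [Finite E] (hT₀ : Spans src tgt T₀)
    (x y : V × DeckGroup m T₀) : IsWalk (coverSrc m src T₀) (coverTgt m tgt T₀) x y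
      (geod (coverSrc m src T₀) (coverTgt m tgt T₀) x y) := by
  obtain ⟨p, hp, -⟩ := hT₀.cover x y
  exact isWalk_geod ⟨p, hp⟩

theorem geodChain_add_geodChain [Finite E] (hT₀ : IsSpanningTree src tgt T₀)
    (x y z : V × DeckGroup m T₀) :
    geodChain src tgt x y + geodChain src tgt y z = geodChain src tgt x z := by
  have hxyz := (isWalk_geod_cover hT₀.1 x y).append (isWalk_geod_cover hT₀.1 y z)
  rw [geodChain, geodChain, geodChain, (isWalk_geod_cover hT₀.1 x z).liftChain_eq hT₀ hxyz]
  exact (signedSum_append _ _ _).symm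

theorem dQ_eq_leeNorm_geodChain [Fintype E] [NeZero m] (h2conn : TwoConnected src tgt)
    (x y : V × DeckGroup m T₀) :
    dQ m src tgt T₀ x y = leeNorm m E (geodChain src tgt x y) := by
  rw [dQ, finsum_eq_sum_of_fintype, leeNorm_apply]
  refine Finset.sum_congr rfl fun e _ => ?_
  rw [geodChain, liftChain_apply, ← min_natAbs_mod_sub_eq_natAbs_valMinAbs]
  exact finsum_one_div_card_mul (h2conn.exists_isSpanningTree_notMem e) _

end Cover

end MultiGraph

open MultiGraph in
theorem dQ_eq_zero_iff_and_metric_general {m : ℕ} (hm : 2 ≤ m) {V E : Type*} [Finite E]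
    {src tgt : E → V} (h2conn : TwoConnected src tgt) {T₀ : Set E}
    (hT₀ : IsSpanningTree src tgt T₀) :
    (∀ x y : V × ({e : E // e ∉ T₀} → ZMod m), dQ m src tgt T₀ x y = 0 ↔ x = y) ∧
      IsMetricOn (dQ m src tgt T₀) := by
  have := Fintype.ofFinite E
  have : NeZero m := ⟨by lia⟩
  have : Fact (1 < m) := ⟨hm⟩
  have hdQ : dQ m src tgt T₀ = fun x y => leeNorm m E (geodChain src tgt x y) :=
    funext₂ (dQ_eq_leeNorm_geodChain h2conn)
  have hmetric : IsMetricOn (dQ m src tgt T₀) := by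
    rw [hdQ]
    exact isMetricOn_of_cocycle (leeNorm m E)
      (fun x y z => (geodChain_add_geodChain hT₀ x y z).symm)
      (fun x y => (isWalk_geod_cover hT₀.1 x y).eq_of_liftChain_eq_zero)
  exact ⟨hmetric.1, hmetric⟩

open MultiGraph in
/-- The pseudometric `d_Q` on the `ℤ/m`-homology cover separates points:
`d_Q(x,y) = 0` if and only if `x = y`; hence `d_Q` is a metric on `X̃`. -/
theorem dQ_eq_zero_iff_and_metric (m : ℕ) (hm : 3 ≤ m)
    (V E : Type) [Fintype V] [Fintype E]
    (src tgt : E → V) (hconn : Connected src tgt) (h2conn : TwoConnected src tgt)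
    (N : ℕ) (hN : ∀ e : E, numTreesAvoiding src tgt e = N)
    (T₀ : Set E) (hT₀ : IsSpanningTree src tgt T₀) :
    (∀ x y : V × ({e : E // e ∉ T₀} → ZMod m),
      dQ m src tgt T₀ x y = 0 ↔ x = y) ∧
    IsMetricOn (dQ m src tgt T₀) :=
  dQ_eq_zero_iff_and_metric_general (Nat.le_of_succ_le hm) h2conn hT₀
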